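/- arXiv:1911.11949 — 2 statements merged into one kernel-verified Lean document; each statement's English description precedes it below -/
import Mathlib

section
/- Let 0 < k < π²/4, 0 < ξ ≤ η < 1, λ₁, λ₂ ≥ 0, suppose condition [A1] holds, and let ψ : [0,1]×ℝ×ℝ → ℝ be continuous. Suppose cₙ ∈ C²([0,1]) is a lower solution of the BVP −u″ = ψ(x,u,u′), u′(0) = λ₁u(ξ), u′(1) = λ₂u(η), i.e. −cₙ″(x) ≤ ψ(x, cₙ(x), cₙ′(x)) on (0,1), cₙ′(0) = λ₁·cₙ(ξ) and cₙ′(1) ≤ λ₂·cₙ(η), and suppose cₙ₊₁ ∈ C²([0,1]) satisfies −cₙ₊₁″(x) − k·cₙ₊₁(x) = ψ(x, cₙ(x), cₙ′(x)) − k·cₙ(x) on (0,1) with cₙ₊₁′(0) = λ₁·cₙ₊₁(ξ) and cₙ₊₁′(1) = λ₂·cₙ₊₁(η). Then cₙ₊₁(x) ≤ cₙ(x) for all x ∈ [0,1]. -/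
open Real Set

/-- `D_k = k·sin √k + λ₂·√k·cos(√k η) + λ₁·(λ₂·sin(√k(η−ξ)) − √k·cos(√k(ξ−1)))`. -/
noncomputable def Dk (k ξ η l1 l2 : ℝ) : ℝ :=
  k * Real.sin (Real.sqrt k) + l2 * Real.sqrt k * Real.cos (Real.sqrt k * η) +
    l1 * (l2 * Real.sin (Real.sqrt k * (η - ξ)) -
      Real.sqrt k * Real.cos (Real.sqrt k * (ξ - 1)))

lemma wronsk (w w1 w2 p p1 : ℝ → ℝ) (k a b : ℝ) (hab : a ≤ b)
    (hw : ∀ x, HasDerivAt w (w1 x) x) (hw1 : ∀ x, HasDerivAt w1 (w2 x) x)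
    (hp : ∀ x, HasDerivAt p (p1 x) x) (hp1 : ∀ x, HasDerivAt p1 (-(k * p x)) x)
    (hf : ∀ x ∈ Ioo a b, 0 ≤ w2 x + k * w x) (hpos : ∀ x ∈ Ioo a b, 0 ≤ p x) :
    w1 a * p a - w a * p1 a ≤ w1 b * p b - w b * p1 b := by
  have hd : ∀ x, HasDerivAt (fun x => w1 x * p x - w x * p1 x) ((w2 x + k * w x) * p x) x := by
    intro x
    have := ((hw1 x).mul (hp x)).sub ((hw x).mul (hp1 x))
    refine this.congr_deriv ?_
    ring
  have hm : MonotoneOn (fun x => w1 x * p x - w x * p1 x) (Icc a b) := by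
    apply monotoneOn_of_deriv_nonneg (convex_Icc a b)
    · exact fun x _ => (hd x).continuousAt.continuousWithinAt
    · exact fun x _ => (hd x).differentiableAt.differentiableWithinAt
    · intro x hx
      rw [interior_Icc] at hx
      rw [(hd x).deriv]
      exact mul_nonneg (hf x hx) (hpos x hx)
  exact hm (left_mem_Icc.2 hab) (right_mem_Icc.2 hab) hab

lemma hsin (s y x : ℝ) : HasDerivAt (fun t => sin (s * (y - t))) (-(s * cos (s * (y - x)))) x := by
  have h : HasDerivAt (fun t : ℝ => s * (y - t)) (s * (0 - 1)) x :=
    ((hasDerivAt_const x y).sub (hasDerivAt_id x)).const_mul s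
  exact h.sin.congr_deriv (by ring)

lemma hcos (s y x : ℝ) : HasDerivAt (fun t => cos (s * (y - t))) (s * sin (s * (y - x))) x := by
  have h : HasDerivAt (fun t : ℝ => s * (y - t)) (s * (0 - 1)) x :=
    ((hasDerivAt_const x y).sub (hasDerivAt_id x)).const_mul s
  exact h.cos.congr_deriv (by ring)

lemma core (s ξ η l1 l2 : ℝ) (w w1 w2 : ℝ → ℝ) (hs : 0 < s) (hs' : s < π / 2)
    (hξ : 0 < ξ) (hξη : ξ ≤ η) (hη : η < 1) (hl1 : 0 ≤ l1) (hl2 : 0 ≤ l2)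
    (hD : 0 < s ^ 2 * sin s + l2 * s * cos (s * η) +
      l1 * (l2 * sin (s * (η - ξ)) - s * cos (s * (ξ - 1))))
    (hb : 0 ≤ s * cos s - l2 * sin (s * η)) (hc : 0 < s - l1 * sin (s * ξ))
    (hw : ∀ x, HasDerivAt w (w1 x) x) (hw1 : ∀ x, HasDerivAt w1 (w2 x) x)
    (hf : ∀ x ∈ Ioo (0:ℝ) 1, 0 ≤ w2 x + s ^ 2 * w x)
    (h0 : w1 0 = l1 * w ξ) (h1 : w1 1 ≤ l2 * w η) :
    ∀ x ∈ Icc (0:ℝ) 1, 0 ≤ w x := by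
  have hpi := Real.pi_pos
  have key : ∀ x ∈ Icc (0:ℝ) 1, w1 0 * sin (s * x) + s * w 0 * cos (s * x) ≤ s * w x := by
    intro x hx
    have := wronsk w w1 w2 (fun t => sin (s * (x - t))) (fun t => -(s * cos (s * (x - t))))
      (s ^ 2) 0 x hx.1 hw hw1 (hsin s x)
      (fun t => (((hcos s x t).const_mul s).neg).congr_deriv (by ring))
      (fun t ht => hf t ⟨ht.1, ht.2.trans_le hx.2⟩)
      (fun t ht => sin_nonneg_of_nonneg_of_le_pi
        (mul_nonneg hs.le (by linarith [ht.2])) (by nlinarith [ht.1, ht.2, hx.2]))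
    simp at this
    linarith
  have e2 := wronsk w w1 w2 (fun t => cos (s * (1 - t))) (fun t => s * sin (s * (1 - t)))
      (s ^ 2) η 1 hη.le hw hw1 (hcos s 1)
      (fun t => (((hsin s 1 t).const_mul s)).congr_deriv (by ring))
      (fun t ht => hf t ⟨by linarith [ht.1], ht.2⟩)
      (fun t ht => cos_nonneg_of_neg_pi_div_two_le_of_le
        (by nlinarith [ht.1, ht.2]) (by nlinarith [ht.1, ht.2]))
  have e3 := wronsk w w1 w2 (fun t => s * cos (s * (1 - t)) - l2 * sin (s * (η - t)))
      (fun t => s * (s * sin (s * (1 - t))) - l2 * (-(s * cos (s * (η - t)))))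
      (s ^ 2) 0 η (by linarith) hw hw1
      (fun t => ((hcos s 1 t).const_mul s).sub ((hsin s η t).const_mul l2))
      (fun t => ((((hsin s 1 t).const_mul s).const_mul s).sub
        (((hcos s η t).const_mul s).neg.const_mul l2)).congr_deriv (by ring))
      (fun t ht => hf t ⟨ht.1, ht.2.trans hη⟩)
      (fun t ht => by
        have c1 : cos s ≤ cos (s * (1 - t)) := 
          cos_le_cos_of_nonneg_of_le_pi (mul_nonneg hs.le (by linarith [ht.2])) (by linarith)
            (by nlinarith [ht.1])
        have c2 : sin (s * (η - t)) ≤ sin (s * η) :=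
          sin_le_sin_of_le_of_le_pi_div_two (by nlinarith [ht.2]) (by nlinarith)
            (by nlinarith [ht.1])
        have := mul_le_mul_of_nonneg_left c1 hs.le
        have := mul_le_mul_of_nonneg_left c2 hl2
        linarith)
  simp at e2 e3
  have kξ := key ξ ⟨hξ.le, by linarith⟩
  have cξ : 0 ≤ cos (s * ξ) := cos_nonneg_of_neg_pi_div_two_le_of_le
        (by nlinarith) (by nlinarith)
  have e4 : l1 * s * w 0 * cos (s * ξ) ≤ w1 0 * (s - l1 * sin (s * ξ)) := by
    have := mul_le_mul_of_nonneg_left kξ hl1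
    linear_combination this - s * h0
  have e5 : w1 0 * (s * cos s - l2 * sin (s * η)) ≤ w 0 * (s * (s * sin s) + l2 * (s * cos (s * η))) := by
    have := mul_le_mul_of_nonneg_left (e2.trans (add_le_add_left h1 _)) hs.le
    linarith
  have a0 : 0 ≤ w 0 := by
    have f1 := mul_le_mul_of_nonneg_right e4 hb
    have f2 := mul_le_mul_of_nonneg_right e5 hc.le
    have eD : s ^ 2 * sin s + l2 * s * cos (s * η) +
      l1 * (l2 * sin (s * (η - ξ)) - s * cos (s * (ξ - 1))) =
      (s * sin s + l2 * cos (s * η)) * (s - l1 * sin (s * ξ))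
        - l1 * cos (s * ξ) * (s * cos s - l2 * sin (s * η)) := by
      rw [mul_sub s η, mul_sub s ξ, mul_one, sin_sub, cos_sub]; ring
    rw [eD] at hD
    have f3 : 0 ≤ w 0 * (s * ((s * sin s + l2 * cos (s * η)) * (s - l1 * sin (s * ξ))
        - l1 * cos (s * ξ) * (s * cos s - l2 * sin (s * η)))) := by linarith
    exact nonneg_of_mul_nonneg_left f3 (mul_pos hs hD)
  have b0 : 0 ≤ w1 0 := by
    refine nonneg_of_mul_nonneg_left (le_trans ?_ e4) hc
    positivity
  intro x hx
  have kx := key x hx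
  have s1 : 0 ≤ sin (s * x) := sin_nonneg_of_nonneg_of_le_pi
    (mul_nonneg hs.le hx.1) (by nlinarith [hx.1, hx.2])
  have s2 : 0 ≤ cos (s * x) := cos_nonneg_of_neg_pi_div_two_le_of_le
    (by nlinarith [hx.1]) (by nlinarith [hx.1, hx.2])
  have : 0 ≤ s * w x := le_trans (by positivity) kx
  exact nonneg_of_mul_nonneg_right this hs

/-- under [A1], if `cₙ` is a lower solution of the BVP and `cₙ₊₁` solves the
linear iterative problem, then `cₙ₊₁ ≤ cₙ` on `[0,1]`. -/
theorem stmt6 (k ξ η l1 l2 : ℝ) (ψ : ℝ → ℝ → ℝ → ℝ) (cn cn1 : ℝ → ℝ)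
    (hk : 0 < k) (hk' : k < Real.pi ^ 2 / 4)
    (hξ : 0 < ξ) (hξη : ξ ≤ η) (hη : η < 1)
    (hl1 : 0 ≤ l1) (hl2 : 0 ≤ l2)
    -- condition [A1]
    (hD : 0 < Dk k ξ η l1 l2)
    (hA1b : 0 ≤ Real.sqrt k * Real.cos (Real.sqrt k) - l2 * Real.sin (Real.sqrt k * η))
    (hA1c : 0 < Real.sqrt k - l1 * Real.sin (Real.sqrt k * ξ))
    (hψ : Continuous fun p : ℝ × ℝ × ℝ => ψ p.1 p.2.1 p.2.2)
    (hcn : ContDiff ℝ 2 cn) (hcn1 : ContDiff ℝ 2 cn1)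
    -- `cₙ` is a lower solution
    (hlow : ∀ x ∈ Ioo (0:ℝ) 1, -(deriv (deriv cn) x) ≤ ψ x (cn x) (deriv cn x))
    (hbc0 : deriv cn 0 = l1 * cn ξ)
    (hbc1 : deriv cn 1 ≤ l2 * cn η)
    -- `cₙ₊₁` solves the iterative scheme
    (heq : ∀ x ∈ Ioo (0:ℝ) 1,
      -(deriv (deriv cn1) x) - k * cn1 x = ψ x (cn x) (deriv cn x) - k * cn x)
    (hbc0' : deriv cn1 0 = l1 * cn1 ξ)
    (hbc1' : deriv cn1 1 = l2 * cn1 η) :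
    ∀ x ∈ Icc (0:ℝ) 1, cn1 x ≤ cn x := by
  have hsq : √k ^ 2 = k := Real.sq_sqrt hk.le
  have hs : 0 < √k := Real.sqrt_pos.2 hk
  have hpi := Real.pi_pos
  have hs' : √k < π / 2 := by
    rw [Real.sqrt_lt' (by positivity)]
    linarith [div_pow π 2 2]
  have dd : ∀ f : ℝ → ℝ, ContDiff ℝ 2 f → (∀ x, HasDerivAt f (deriv f x) x) ∧
      ∀ x, HasDerivAt (deriv f) (deriv (deriv f) x) x := by
    intro f hf
    have h2 : ContDiff ℝ 1 (deriv f) := by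
      have : ContDiff ℝ (1 + 1) f := by simpa [one_add_one_eq_two] using hf
      exact (contDiff_succ_iff_deriv.1 this).2.2
    exact ⟨fun x => (hf.differentiable (by norm_num) x).hasDerivAt,
      fun x => (h2.differentiable (by norm_num) x).hasDerivAt⟩
  obtain ⟨p, p'⟩ := dd cn hcn
  obtain ⟨q, q'⟩ := dd cn1 hcn1
  have := core (√k) ξ η l1 l2 (fun x => cn x - cn1 x) (fun x => deriv cn x - deriv cn1 x)
    (fun x => deriv (deriv cn) x - deriv (deriv cn1) x) hs hs' hξ hξη hη hl1 hl2
    (by rw [hsq]; exact hD) hA1b hA1c (fun x => (p x).sub (q x)) (fun x => (p' x).sub (q' x))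
    (fun x hx => by
      have h1 := hlow x hx
      have h2 := heq x hx
      simp only [hsq]
      linarith)
    (by simp only [hbc0, hbc0']; ring) (by simp only [hbc1']; linarith)
  intro x hx
  linarith [this x hx]
end

section
/- Let k < 0, 0 < ξ ≤ η < 1, λ₁, λ₂ ≥ 0, and suppose condition [A1′] holds. Then the Green's function G(x,s) satisfies G(x,s) ≤ 0 for all x, s ∈ [0,1]. -/
open Real Set

/-- `D_k′ = |k|·sinh m − λ₂·m·cosh(mη) − λ₁λ₂·sinh(m(η−ξ)) + λ₁·m·cosh(m(ξ−1))`,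
where `m = √|k|`. -/
noncomputable def Dk' (k ξ η l1 l2 : ℝ) : ℝ :=
  |k| * Real.sinh (Real.sqrt |k|) - l2 * Real.sqrt |k| * Real.cosh (Real.sqrt |k| * η) -
    l1 * l2 * Real.sinh (Real.sqrt |k| * (η - ξ)) +
    l1 * Real.sqrt |k| * Real.cosh (Real.sqrt |k| * (ξ - 1))

/-- The Green's function of the four-point BVP `-u'' - k u = g`,
`u'(0) = λ₁ u(ξ)`, `u'(1) = λ₂ u(η)` in the case `k < 0`, with `m = √|k|`. -/
noncomputable def GreenNeg (k ξ η l1 l2 x s : ℝ) : ℝ :=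
  (1 / (Real.sqrt |k| * Dk' k ξ η l1 l2)) *
    (if 0 ≤ x ∧ x ≤ s ∧ s ≤ ξ then
      Real.sqrt |k| * Real.cosh (Real.sqrt |k| * x) *
          (l2 * Real.sinh (Real.sqrt |k| * (η - s)) -
            Real.sqrt |k| * Real.cosh (Real.sqrt |k| * (s - 1))) +
        l1 * Real.sinh (Real.sqrt |k| * (s - x)) *
          (Real.sqrt |k| * Real.cosh (Real.sqrt |k| * (ξ - 1)) -
            l2 * Real.sinh (Real.sqrt |k| * (η - ξ)))
    else if s ≤ x ∧ s ≤ ξ then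
      -(Real.sqrt |k| * Real.cosh (Real.sqrt |k| * s) *
        (Real.sqrt |k| * Real.cosh (Real.sqrt |k| * (x - 1)) +
          l2 * Real.sinh (Real.sqrt |k| * (x - η))))
    else if ξ ≤ x ∧ x ≤ s ∧ s ≤ η then
      -((Real.sqrt |k| * Real.cosh (Real.sqrt |k| * x) +
          l1 * Real.sinh (Real.sqrt |k| * (x - ξ))) *
        (Real.sqrt |k| * Real.cosh (Real.sqrt |k| * (s - 1)) +
          l2 * Real.sinh (Real.sqrt |k| * (s - η))))
    else if s ≤ x ∧ ξ ≤ s ∧ s ≤ η then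
      -((Real.sqrt |k| * Real.cosh (Real.sqrt |k| * s) +
          l1 * Real.sinh (Real.sqrt |k| * (s - ξ))) *
        (Real.sqrt |k| * Real.cosh (Real.sqrt |k| * (x - 1)) +
          l2 * Real.sinh (Real.sqrt |k| * (x - η))))
    else if η ≤ x ∧ x ≤ s ∧ s ≤ 1 then
      -(Real.sqrt |k| * Real.cosh (Real.sqrt |k| * (s - 1)) *
        (Real.sqrt |k| * Real.cosh (Real.sqrt |k| * x) +
          l1 * Real.sinh (Real.sqrt |k| * (x - ξ))))
    else
      Real.sqrt |k| * Real.cosh (Real.sqrt |k| * (x - 1)) *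
          (l1 * Real.sinh (Real.sqrt |k| * (ξ - s)) -
            Real.sqrt |k| * Real.cosh (Real.sqrt |k| * s)) +
        l2 * Real.sinh (Real.sqrt |k| * (s - x)) *
          (Real.sqrt |k| * Real.cosh (Real.sqrt |k| * η) +
            l1 * Real.sinh (Real.sqrt |k| * (η - ξ))))

theorem aux_sinh (y : ℝ) : Real.sinh y = Real.tanh y * Real.cosh y := by
  rw [Real.tanh_eq_sinh_div_cosh]; field_simp [(Real.cosh_pos y).ne']

theorem aux_sinh_sub (a b : ℝ) : Real.sinh (a - b) =
    Real.cosh a * Real.cosh b * (Real.tanh a - Real.tanh b) := by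
  rw [Real.sinh_sub, aux_sinh a, aux_sinh b]; ring

theorem aux_cosh_sub (a b : ℝ) : Real.cosh (a - b) =
    Real.cosh a * Real.cosh b * (1 - Real.tanh a * Real.tanh b) := by
  rw [Real.cosh_sub, aux_sinh a, aux_sinh b]; ring

theorem aux_mono {a b : ℝ} (h : a ≤ b) : Real.tanh a ≤ Real.tanh b := by
  have h1 : 0 ≤ Real.sinh (b - a) := Real.sinh_nonneg_iff.2 (by linarith)
  rw [aux_sinh_sub] at h1
  have := nonneg_of_mul_nonneg_right h1 (mul_pos (Real.cosh_pos b) (Real.cosh_pos a))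
  linarith

theorem aux_nonneg {a : ℝ} (h : 0 ≤ a) : 0 ≤ Real.tanh a := by
  simpa using aux_mono h

theorem aux_A {m z l1 y : ℝ} (hm : 0 < m) (hl1 : 0 ≤ l1) (hz : 0 ≤ z)
    (hc : 0 < m - l1 * Real.cosh z) (hy : 0 ≤ y) :
    0 ≤ m * Real.cosh y + l1 * Real.sinh (y - z) := by
  rw [aux_sinh_sub]
  have h1 := aux_nonneg hy
  have h2 := Real.tanh_lt_one z
  have e : m * Real.cosh y + l1 * (Real.cosh y * Real.cosh z * (Real.tanh y - Real.tanh z)) =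
    Real.cosh y * ((m - l1 * Real.cosh z) + l1 * Real.cosh z * (1 - Real.tanh z)
      + l1 * Real.cosh z * Real.tanh y) := by ring
  rw [e]
  have := Real.cosh_pos y
  have := Real.cosh_pos z
  have h3 : 0 ≤ 1 - Real.tanh z := by linarith
  positivity

theorem aux_B {m n l2 y : ℝ} (hm : 0 < m) (hl2 : 0 ≤ l2) (hn : n ≤ m)
    (ha : 0 ≤ m * Real.sinh m - l2 * Real.cosh n) (hy : 0 ≤ y) (hn0 : 0 ≤ n) :
    0 ≤ m * Real.cosh (y - m) + l2 * Real.sinh (y - n) := by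
  rw [aux_sinh_sub, aux_cosh_sub]
  rw [aux_sinh m] at ha
  have h1 := aux_nonneg hy
  have h2 := Real.tanh_lt_one y
  have h3 := Real.tanh_lt_one m
  have h4 := Real.tanh_lt_one n
  have h5 := aux_nonneg hm.le
  have h6 := aux_nonneg hn0
  have cy := Real.cosh_pos y
  have cm := Real.cosh_pos m
  have cn := Real.cosh_pos n
  have e : m * (Real.cosh y * Real.cosh m * (1 - Real.tanh y * Real.tanh m)) +
      l2 * (Real.cosh y * Real.cosh n * (Real.tanh y - Real.tanh n)) =
    Real.cosh y * ((m * (Real.tanh m * Real.cosh m) - l2 * Real.cosh n) * Real.tanh n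
      + m * Real.cosh m * (1 - Real.tanh m * Real.tanh n - Real.tanh y * Real.tanh m)
      + l2 * Real.cosh n * Real.tanh y) := by ring
  have e2 : m * (Real.cosh y * Real.cosh m * (1 - Real.tanh y * Real.tanh m)) +
      l2 * (Real.cosh y * Real.cosh n * (Real.tanh y - Real.tanh n)) =
    Real.cosh y * ((m * (Real.tanh m * Real.cosh m) - l2 * Real.cosh n) * (Real.tanh n - Real.tanh y)
      + m * Real.cosh m * (1 - Real.tanh m * Real.tanh n)) := by ring
  rcases le_total (Real.tanh n) (Real.tanh y) with h | h
  · have : 0 ≤ Real.tanh y - Real.tanh n := by linarith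
    have : 0 ≤ 1 - Real.tanh y * Real.tanh m := by nlinarith
    positivity
  · rw [e2]
    have : 0 ≤ Real.tanh n - Real.tanh y := by linarith
    have : 0 ≤ 1 - Real.tanh m * Real.tanh n := by nlinarith
    positivity

theorem aux_one {m z n l1 l2 x s : ℝ} (hm : 0 < m) (hl1 : 0 ≤ l1) (hl2 : 0 ≤ l2)
    (hn : n ≤ m) (hn0 : 0 ≤ n) (hz : 0 ≤ z)
    (ha : 0 ≤ m * Real.sinh m - l2 * Real.cosh n)
    (hc : 0 < m - l1 * Real.cosh z) (hx : 0 ≤ x) (hxs : x ≤ s) (hsz : s ≤ z) :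
    m * Real.cosh x * (l2 * Real.sinh (n - s) - m * Real.cosh (s - m)) +
      l1 * Real.sinh (s - x) * (m * Real.cosh (z - m) - l2 * Real.sinh (n - z)) ≤ 0 := by
  have hB := aux_B hm hl2 hn ha hz hn0
  have f : ∀ y, m * Real.cosh (y - m) + l2 * Real.sinh (y - n) = Real.cosh y *
      ((m * Real.cosh m - l2 * Real.sinh n) -
        (m * Real.sinh m - l2 * Real.cosh n) * Real.tanh y) := by
    intro y
    rw [aux_sinh_sub, aux_cosh_sub, aux_sinh n, aux_sinh m]; ring
  have g : ∀ y, Real.sinh (n - y) = - Real.sinh (y - n) := by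
    intro y; rw [← Real.sinh_neg]; congr 1; ring
  rw [g, g]
  have e : m * Real.cosh x * (l2 * -Real.sinh (s - n) - m * Real.cosh (s - m)) +
      l1 * Real.sinh (s - x) * (m * Real.cosh (z - m) - l2 * -Real.sinh (z - n)) =
      -(m * Real.cosh x * (m * Real.cosh (s - m) + l2 * Real.sinh (s - n))) +
      l1 * Real.sinh (s - x) * (m * Real.cosh (z - m) + l2 * Real.sinh (z - n)) := by ring
  rw [e]
  rw [f] at hB
  rw [f, f, aux_sinh_sub]
  have hB' := nonneg_of_mul_nonneg_right hB (Real.cosh_pos z)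
  set p := m * Real.cosh m - l2 * Real.sinh n
  set q := m * Real.sinh m - l2 * Real.cosh n
  have h1 := aux_mono hxs
  have h2 := aux_mono hsz
  have h3 := aux_nonneg hx
  have h4 := Real.tanh_lt_one s
  have cx := Real.cosh_pos x
  have cs := Real.cosh_pos s
  have cz := Real.cosh_pos z
  have k1 : 0 ≤ q * (Real.tanh z - Real.tanh s) := mul_nonneg ha (by linarith)
  have k2 : 0 ≤ m - l1 * Real.cosh z * (Real.tanh s - Real.tanh x) := by
    have : 0 ≤ l1 * Real.cosh z := by positivity
    nlinarith
  have e3 : -(m * Real.cosh x * (Real.cosh s * (p - q * Real.tanh s))) +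
      l1 * (Real.cosh s * Real.cosh x * (Real.tanh s - Real.tanh x)) *
        (Real.cosh z * (p - q * Real.tanh z)) =
      -(Real.cosh x * Real.cosh s * (m * (q * (Real.tanh z - Real.tanh s)) +
        (p - q * Real.tanh z) * (m - l1 * Real.cosh z * (Real.tanh s - Real.tanh x)))) := by ring
  rw [e3]
  have : 0 ≤ Real.cosh x * Real.cosh s * (m * (q * (Real.tanh z - Real.tanh s)) +
        (p - q * Real.tanh z) * (m - l1 * Real.cosh z * (Real.tanh s - Real.tanh x))) := by
    positivity
  linarith

theorem aux_two {m z n l1 l2 x s : ℝ} (hm : 0 < m) (hl1 : 0 ≤ l1) (hl2 : 0 ≤ l2)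
    (hn0 : 0 ≤ n) (hz : 0 ≤ z) (hzn : z ≤ n)
    (ha : 0 ≤ m * Real.sinh m - l2 * Real.cosh n)
    (hc : 0 < m - l1 * Real.cosh z) (hx : 0 ≤ x) (hs : 0 ≤ s) :
    m * Real.cosh (x - m) * (l1 * Real.sinh (z - s) - m * Real.cosh s) +
      l2 * Real.sinh (s - x) * (m * Real.cosh n + l1 * Real.sinh (n - z)) ≤ 0 := by
  have g : Real.sinh (z - s) = - Real.sinh (s - z) := by
    rw [← Real.sinh_neg]; congr 1; ring
  have hAs := aux_A hm hl1 hz hc hs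
  have hAn := aux_A hm hl1 hz hc hn0
  have hch := Real.cosh_pos (x - m)
  have e0 : m * Real.cosh (x - m) * (l1 * Real.sinh (z - s) - m * Real.cosh s) =
    -(m * Real.cosh (x - m) * (m * Real.cosh s + l1 * Real.sinh (s - z))) := by rw [g]; ring
  rw [e0]
  have k0 : 0 ≤ m * Real.cosh (x - m) * (m * Real.cosh s + l1 * Real.sinh (s - z)) := by
    positivity
  rcases le_total s x with hsx | hxs
  · have h1 : Real.sinh (s - x) ≤ 0 := Real.sinh_nonpos_iff.2 (by linarith)
    have : l2 * Real.sinh (s - x) * (m * Real.cosh n + l1 * Real.sinh (n - z)) ≤ 0 :=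
      mul_nonpos_of_nonpos_of_nonneg (mul_nonpos_of_nonneg_of_nonpos hl2 h1) hAn
    linarith
  have cx := Real.cosh_pos x
  have cs := Real.cosh_pos s
  have cz := Real.cosh_pos z
  have cn := Real.cosh_pos n
  have cm := Real.cosh_pos m
  have f : ∀ y, m * Real.cosh y + l1 * Real.sinh (y - z) = Real.cosh y *
      ((m - l1 * Real.cosh z * Real.tanh z) + l1 * Real.cosh z * Real.tanh y) := by
    intro y
    rw [aux_sinh_sub]; ring
  rw [f] at hAn
  have hAn' := nonneg_of_mul_nonneg_right hAn cn
  rw [f, f, aux_sinh_sub, aux_cosh_sub]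
  have hQ : 0 ≤ l1 * Real.cosh z := by positivity
  have hP : 0 ≤ m - l1 * Real.cosh z * Real.tanh z := by
    have := Real.tanh_lt_one z
    nlinarith
  set P := m - l1 * Real.cosh z * Real.tanh z
  set Q := l1 * Real.cosh z
  rw [aux_sinh m] at ha
  have h1 := aux_mono hxs
  have h3 := aux_nonneg hx
  have hS1 := Real.tanh_lt_one s
  have hN0 := aux_nonneg hn0
  have hN1 := Real.tanh_lt_one n
  have hT0 := aux_nonneg hm.le
  have hT1 := Real.tanh_lt_one m
  generalize Real.tanh x = X at *
  generalize Real.tanh s = S at *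
  generalize Real.tanh n = N at *
  generalize Real.tanh m = T at *
  have hS0 : 0 ≤ S := h3.trans h1
  have hTS : 0 ≤ 1 - T * S := by nlinarith
  have hTN : 0 ≤ 1 - T * N := by nlinarith
  have hR : 0 ≤ S * (1 - T * N) + T * X * (N - S) := by
    rcases le_total S N with h | h
    · have : 0 ≤ N - S := by linarith
      positivity
    · have e : S * (1 - T * N) + T * X * (N - S) =
        S * (1 - T * S) + T * ((S - X) * (S - N)) := by ring
      rw [e]
      have : 0 ≤ S - X := by linarith
      have : 0 ≤ S - N := by linarith
      positivity
  have hSX : 0 ≤ S - X := by linarith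
  have e : m * (Real.cosh x * Real.cosh m * (1 - X * T)) * (Real.cosh s * (P + Q * S)) -
      l2 * (Real.cosh s * Real.cosh x * (S - X)) * (Real.cosh n * (P + Q * N)) =
      Real.cosh x * Real.cosh s * ((m * (T * Real.cosh m) - l2 * Real.cosh n) * ((S - X) * (P + Q * N))
       + m * Real.cosh m * (P * (1 - T * S) + Q * (S * (1 - T * N) + T * X * (N - S)))) := by ring
  have : 0 ≤ Real.cosh x * Real.cosh s * ((m * (T * Real.cosh m) - l2 * Real.cosh n) * ((S - X) * (P + Q * N))
       + m * Real.cosh m * (P * (1 - T * S) + Q * (S * (1 - T * N) + T * X * (N - S)))) := by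
    positivity
  linarith

/-- for `k < 0`, under condition [A1′], the Green's function is nonpositive
on `[0,1]²`. -/
theorem stmt13 (k ξ η l1 l2 : ℝ)
    (hk : k < 0)
    (hξ : 0 < ξ) (hξη : ξ ≤ η) (hη : η < 1)
    (hl1 : 0 ≤ l1) (hl2 : 0 ≤ l2)
    -- condition [A1′], with m = √|k|
    (hA1a : 0 ≤ Real.sqrt |k| * Real.sinh (Real.sqrt |k|) -
      l2 * Real.cosh (Real.sqrt |k| * η))
    (hA1b : Real.sqrt |k| * Real.sinh (Real.sqrt |k| * ξ) +
      (l1 - Real.sqrt |k|) * Real.cosh (Real.sqrt |k| * ξ) ≤ 0)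
    (hA1c : 0 < Real.sqrt |k| - l1 * Real.cosh (Real.sqrt |k| * ξ)) :
    ∀ x ∈ Icc (0:ℝ) 1, ∀ s ∈ Icc (0:ℝ) 1, GreenNeg k ξ η l1 l2 x s ≤ 0 := by
  intro x hx s hs
  obtain ⟨hx0, hx1⟩ := hx
  obtain ⟨hs0, hs1⟩ := hs
  have hm : 0 < Real.sqrt |k| := Real.sqrt_pos.2 (abs_pos.2 hk.ne)
  have hk2 : |k| = Real.sqrt |k| * Real.sqrt |k| := (Real.mul_self_sqrt (abs_nonneg k)).symm
  unfold GreenNeg Dk'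
  generalize Real.sqrt |k| = m at *
  rw [hk2]
  simp only [mul_sub, mul_one]
  have hz : 0 ≤ m * ξ := by positivity
  have hzn : m * ξ ≤ m * η := by gcongr
  have hn0 : 0 ≤ m * η := hz.trans hzn
  have hn : m * η ≤ m := by nlinarith
  have hxx : 0 ≤ m * x := by positivity
  have hss : 0 ≤ m * s := by positivity
  have cs := Real.cosh_pos (m * s)
  have hBx := aux_B hm hl2 hn hA1a hxx hn0
  have hBs := aux_B hm hl2 hn hA1a hss hn0
  have hBz := aux_B hm hl2 hn hA1a hz hn0
  have hAx := aux_A hm hl1 hz hA1c hxx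
  have hAs := aux_A hm hl1 hz hA1c hss
  have csm := Real.cosh_pos (m * s - m)
  have hD : 0 ≤ m * m * Real.sinh m - l2 * m * Real.cosh (m * η) -
      l1 * l2 * Real.sinh (m * η - m * ξ) + l1 * m * Real.cosh (m * ξ - m) := by
    have g : Real.sinh (m * η - m * ξ) = - Real.sinh (m * ξ - m * η) := by
      rw [← Real.sinh_neg]; congr 1; ring
    rw [g]
    have h1 := mul_nonneg hm.le hA1a
    have h2 := mul_nonneg hl1 hBz
    linarith
  apply mul_nonpos_of_nonneg_of_nonpos
  · apply one_div_nonneg.2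
    exact mul_nonneg hm.le (by simpa only [mul_sub, mul_one] using hD)
  split_ifs with h1 h2 h3 h4 h5
  · have := aux_one hm hl1 hl2 hn hn0 hz hA1a hA1c hxx
      (mul_le_mul_of_nonneg_left h1.2.1 hm.le) (mul_le_mul_of_nonneg_left h1.2.2 hm.le)
    linarith
  · have := mul_nonneg (mul_nonneg hm.le cs.le) hBx
    linarith
  · have := mul_nonneg hAx hBs
    linarith
  · have := mul_nonneg hAs hBx
    linarith
  · have := mul_nonneg (mul_nonneg hm.le csm.le) hAx
    linarith
  · have := aux_two hm hl1 hl2 hn0 hz hzn hA1a hA1c hxx hss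
    linarith
end
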